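/- (Eigenvalue lower bound on complement of Ritz space, Lemma 3.2) Let A ∈ ℂ^(N×N) be Hermitian with eigenvalues λ^(1) ≤ ... ≤ λ^(N) and let V ∈ ℂ^(N×ℓ) collect orthonormal eigenvectors for λ^(1),...,λ^(ℓ), with Λ = diag(λ^(1),...,λ^(ℓ)). Let U ∈ ℂ^(N×r) have orthonormal columns with N − r ≥ r, and let U⊥ span the orthogonal complement of range(U). Then λ_min(U⊥* A U⊥) ≥ λ^(1) + β, where β is the smallest eigenvalue of the ℓ×ℓ matrix (Λ − λ^(1) I_ℓ) − V*UU*V (Λ − λ^(ℓ+1) I_ℓ). -/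

import Mathlib

open Matrix

/-- Smallest eigenvalue of a (Hermitian) matrix. -/
noncomputable def lamMin {n : ℕ} {𝕜 : Type*} [RCLike 𝕜] (A : Matrix (Fin n) (Fin n) 𝕜) : ℝ :=
  if h : A.IsHermitian then ⨅ i, h.eigenvalues i else 0

/-- Largest eigenvalue of a (Hermitian) matrix. -/
noncomputable def lamMax {n : ℕ} {𝕜 : Type*} [RCLike 𝕜] (A : Matrix (Fin n) (Fin n) 𝕜) : ℝ :=
  if h : A.IsHermitian then ⨆ i, h.eigenvalues i else 0

/-- Rayleigh quotient u*Au/(u*u). -/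
noncomputable def RQ {n : ℕ} (A : Matrix (Fin n) (Fin n) ℂ) (u : Fin n → ℂ) : ℝ :=
  (star u ⬝ᵥ A *ᵥ u).re / (star u ⬝ᵥ u).re

/-!
Put `σ = λ^(ℓ+1)`, `D = σI - Λ ⪰ 0` and `G = V*U⊥`. The spectral decomposition gives
`A ⪰ σI - VDV*`, which compresses to `U⊥*AU⊥ ⪰ σI - G*DG`. Since `V*UU*V = I - GG*`, the matrix
whose smallest eigenvalue is `β` equals `(σ - λ^(1))I - GG*D`, so `σ - λ^(1) - β` is the largest
eigenvalue of `GG*D`. This product has the same nonzero eigenvalues as `G*DG ⪰ 0`; in particular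
its largest eigenvalue is nonnegative, so it also dominates a possible eigenvalue `0` of `G*DG`,
and `G*DG ⪯ (σ - λ^(1) - β)I`.
-/

open scoped ComplexOrder MatrixOrder

theorem unit_mem_spectrum_iff {R A : Type*} [CommSemiring R] [Ring A] [Algebra R A]
    {a : A} {u : Rˣ} :
    (u : R) ∈ spectrum R a ↔ ¬IsUnit (1 - u⁻¹ • a) := by
  rw [spectrum.mem_iff, Algebra.algebraMap_eq_smul_one, ← Units.smul_def,
    IsUnit.smul_sub_iff_sub_inv_smul]

theorem mem_spectrum_smul_one_sub_iff {R A : Type*} [CommRing R] [Ring A] [Algebra R A]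
    {a : A} {c x : R} :
    x ∈ spectrum R (c • 1 - a) ↔ c - x ∈ spectrum R a := by
  rw [spectrum.mem_iff, spectrum.mem_iff, Algebra.algebraMap_eq_smul_one,
    Algebra.algebraMap_eq_smul_one, ← IsUnit.neg_iff, sub_smul]
  congr! 2
  abel

theorem unit_mem_spectrum_mul_comm {R S m n : Type*} [CommSemiring R] [CommRing S]
    [Algebra R S] [Fintype m] [DecidableEq m] [Fintype n] [DecidableEq n]
    (X : Matrix m n S) (Y : Matrix n m S) (u : Rˣ) :
    (u : R) ∈ spectrum R (X * Y) ↔ (u : R) ∈ spectrum R (Y * X) := by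
  rw [unit_mem_spectrum_iff, unit_mem_spectrum_iff, ← Matrix.smul_mul, ← Matrix.mul_smul,
    isUnit_iff_isUnit_det, isUnit_iff_isUnit_det, det_one_sub_mul_comm]

section Isometry

variable {α k m n p : Type*}

theorem conjTranspose_submatrix_mul_submatrix [NonAssocSemiring α] [StarRing α] [Fintype m]
    [DecidableEq k] [DecidableEq n] {W : Matrix m n α} (hW : Wᴴ * W = 1) {e : k → n}
    (he : Function.Injective e) : (W.submatrix id e)ᴴ * W.submatrix id e = 1 := by
  rw [conjTranspose_submatrix, ← submatrix_mul _ _ e id e Function.bijective_id, hW,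
    submatrix_one _ he]

theorem submatrix_mul_diagonal_mul_conjTranspose [NonUnitalSemiring α] [StarRing α]
    [Fintype k] [DecidableEq k] [Fintype n] [DecidableEq n] (W : Matrix m n α) {e : k → n}
    (he : Function.Injective e) {d : n → α} (hd : ∀ i ∉ Set.range e, d i = 0) :
    W.submatrix id e * diagonal (d ∘ e) * (W.submatrix id e)ᴴ = W * diagonal d * Wᴴ := by
  ext i j
  simp only [mul_apply (M := _ * _), mul_diagonal]
  exact Fintype.sum_of_injective e he _ _ (fun l hl => by simp [hd l hl]) fun _ => rfl

theorem sub_compression_mul_eq_smul_one_sub {R : Type*} [Ring R] [Ring α] [StarRing α]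
    [Module R α] [SMulCommClass R α α] [Fintype k] [DecidableEq k] [Fintype m] [Fintype n]
    [DecidableEq n] [Fintype p] {V : Matrix n k α} (hV : Vᴴ * V = 1) {U : Matrix n m α}
    {Up : Matrix n p α} (hcomplete : U * Uᴴ + Up * Upᴴ = 1) (L : Matrix k k α) (τ σ : R) :
    (L - τ • 1) - (Vᴴ * U * Uᴴ * V) * (L - σ • 1) =
      (σ - τ) • 1 - (Vᴴ * Up) * (Vᴴ * Up)ᴴ * (σ • 1 - L) := by
  have hcompression : Vᴴ * U * Uᴴ * V = 1 - (Vᴴ * Up) * (Vᴴ * Up)ᴴ :=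
    calc Vᴴ * U * Uᴴ * V = Vᴴ * (U * Uᴴ) * V := by simp only [Matrix.mul_assoc]
      _ = Vᴴ * (1 - Up * Upᴴ) * V := by rw [eq_sub_of_add_eq hcomplete]
      _ = 1 - (Vᴴ * Up) * (Vᴴ * Up)ᴴ := by
        simp only [Matrix.mul_sub, Matrix.sub_mul, Matrix.mul_one, hV, conjTranspose_mul,
          conjTranspose_conjTranspose, Matrix.mul_assoc]
  rw [hcompression, Matrix.sub_mul, Matrix.one_mul, ← neg_sub (σ • 1) L, Matrix.mul_neg, sub_smul]
  abel

end Isometry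

section RCLike

variable {𝕜 k n p : Type*} [RCLike 𝕜]

theorem hasEigenvalue_mulVecLin_iff_mem_spectrum [Fintype n] [DecidableEq n]
    {M : Matrix n n 𝕜} {x : ℝ} :
    Module.End.HasEigenvalue M.mulVecLin (x : 𝕜) ↔ x ∈ spectrum ℝ M := by
  rw [Module.End.hasEigenvalue_iff_mem_spectrum, ← toLin'_apply', spectrum_toLin']
  exact spectrum.algebraMap_mem_iff 𝕜

theorem le_lamMin_of_smul_one_le {q : ℕ} [NeZero q] {M : Matrix (Fin q) (Fin q) 𝕜} {c : ℝ}
    (hM : M.IsHermitian) (hc : c • 1 ≤ M) : c ≤ lamMin M := by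
  rw [← Algebra.algebraMap_eq_smul_one, algebraMap_le_iff_le_spectrum hM.isSelfAdjoint] at hc
  rw [lamMin, dif_pos hM]
  exact le_ciInf fun i => hc _ (hM.eigenvalues_mem_spectrum_real i)

theorem conjTranspose_mul_mul_mono [Fintype n] [Finite p] {M N : Matrix n n 𝕜} (h : M ≤ N)
    (X : Matrix n p 𝕜) : Xᴴ * M * X ≤ Xᴴ * N * X := by
  rw [Matrix.le_iff, ← Matrix.sub_mul, ← Matrix.mul_sub]
  exact (Matrix.le_iff.1 h).conjTranspose_mul_mul_same X

theorem smul_one_sub_diagonal_ofReal [DecidableEq n] (d : n → ℝ) (σ : ℝ) :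
    σ • (1 : Matrix n n 𝕜) - diagonal (fun i => (d i : 𝕜)) =
      diagonal (fun i => ((σ - d i : ℝ) : 𝕜)) := by
  rw [← diagonal_one, ← diagonal_smul, diagonal_sub]
  simp [RCLike.real_smul_eq_coe_mul]

theorem posSemidef_smul_one_sub_diagonal_ofReal [DecidableEq n] {d : n → ℝ} {σ : ℝ}
    (hd : ∀ i, d i ≤ σ) :
    (σ • (1 : Matrix n n 𝕜) - diagonal (fun i => (d i : 𝕜))).PosSemidef := by
  rw [smul_one_sub_diagonal_ofReal]
  exact PosSemidef.diagonal fun i => RCLike.ofReal_nonneg.2 (sub_nonneg.2 (hd i))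

variable [Fintype k] [DecidableEq k] [Fintype n] [DecidableEq n] [Fintype p] [DecidableEq p]

theorem conjTranspose_mul_mul_le_smul_one_of_isGreatest_spectrum {D : Matrix k k 𝕜}
    (hD : D.PosSemidef) (G : Matrix k p 𝕜) {μ : ℝ} (hμ : IsGreatest (spectrum ℝ (G * Gᴴ * D)) μ) :
    Gᴴ * D * G ≤ μ • 1 := by
  have hS : (Gᴴ * D * G).PosSemidef := hD.conjTranspose_mul_mul_same G
  have mem_iff {x : ℝ} (hx : x ≠ 0) :
      x ∈ spectrum ℝ (G * Gᴴ * D) ↔ x ∈ spectrum ℝ (Gᴴ * D * G) := by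
    rw [Matrix.mul_assoc]
    exact unit_mem_spectrum_mul_comm G (Gᴴ * D) (Units.mk0 x hx)
  have hμ_nonneg : 0 ≤ μ := by
    obtain rfl | hμ0 := eq_or_ne μ 0
    · exact le_rfl
    · exact spectrum_nonneg_of_nonneg hS.nonneg ((mem_iff hμ0).1 hμ.1)
  rw [← Algebra.algebraMap_eq_smul_one,
    le_algebraMap_iff_spectrum_le hS.isHermitian.isSelfAdjoint]
  intro x hx
  obtain rfl | hx0 := eq_or_ne x 0
  · exact hμ_nonneg
  · exact hμ.2 ((mem_iff hx0).2 hx)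

theorem smul_one_le_smul_one_sub_of_isLeast_spectrum {D : Matrix k k 𝕜} (hD : D.PosSemidef)
    (G : Matrix k p 𝕜) {b c : ℝ} (hb : IsLeast (spectrum ℝ (c • 1 - G * Gᴴ * D)) b) :
    b • 1 ≤ c • 1 - Gᴴ * D * G := by
  have hgreatest : IsGreatest (spectrum ℝ (G * Gᴴ * D)) (c - b) := by
    refine ⟨mem_spectrum_smul_one_sub_iff.1 hb.1, fun x hx => ?_⟩
    rw [le_sub_comm]
    exact hb.2 (mem_spectrum_smul_one_sub_iff.2 (by rwa [sub_sub_cancel]))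
  rw [le_sub_comm, ← sub_smul]
  exact conjTranspose_mul_mul_le_smul_one_of_isGreatest_spectrum hD G hgreatest

theorem smul_one_sub_submatrix_mul_le_mul_diagonal_mul {W : Matrix n n 𝕜} (hW : Wᴴ * W = 1)
    (lam : n → ℝ) {e : k → n} (he : Function.Injective e) {σ : ℝ}
    (hσ : ∀ i ∉ Set.range e, σ ≤ lam i) :
    σ • 1 - W.submatrix id e * (σ • 1 - diagonal (fun j => (lam (e j) : 𝕜))) *
      (W.submatrix id e)ᴴ ≤ W * diagonal (fun i => (lam i : 𝕜)) * Wᴴ := by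
  set d : n → 𝕜 := (Set.range e).indicator fun i => ((σ - lam i : ℝ) : 𝕜)
  have hV : W.submatrix id e * (σ • 1 - diagonal (fun j => (lam (e j) : 𝕜))) *
      (W.submatrix id e)ᴴ = W * diagonal d * Wᴴ := by
    rw [← submatrix_mul_diagonal_mul_conjTranspose W he fun i hi => Set.indicator_of_notMem hi _,
      smul_one_sub_diagonal_ofReal]
    simp [Function.comp_def]
  have hscalar : σ • (1 : Matrix n n 𝕜) = W * diagonal (fun _ => (σ : 𝕜)) * Wᴴ := by
    rw [← smul_one_eq_diagonal, Matrix.mul_smul, Matrix.mul_one, Matrix.smul_mul,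
      mul_eq_one_comm.1 hW, RCLike.real_smul_eq_coe_smul (K := 𝕜)]
  rw [hscalar, hV, Matrix.le_iff, ← Matrix.sub_mul, ← Matrix.mul_sub, ← Matrix.sub_mul,
    ← Matrix.mul_sub, diagonal_sub, diagonal_sub]
  refine (PosSemidef.diagonal fun i => ?_).mul_mul_conjTranspose_same W
  by_cases hi : i ∈ Set.range e
  · simp [d, Set.indicator_of_mem hi]
  · simpa [d, Set.indicator_of_notMem hi] using hσ i hi

theorem eigenvalue_lower_bound_on_complement_of_ritz_space_general {m : Type*} [Fintype m]
    {q : ℕ} [NeZero q] {A W : Matrix n n 𝕜} (hW : Wᴴ * W = 1) {lam : n → ℝ}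
    (hdecomp : A = W * diagonal (fun i => (lam i : 𝕜)) * Wᴴ)
    {e : k → n} (he : Function.Injective e) {σ : ℝ} (hle : ∀ j, lam (e j) ≤ σ)
    (hge : ∀ i ∉ Set.range e, σ ≤ lam i)
    {V : Matrix n k 𝕜} (hV : V = W.submatrix id e)
    {U : Matrix n m 𝕜} {Up : Matrix n (Fin q) 𝕜} (hUp : Upᴴ * Up = 1)
    (hcomplete : U * Uᴴ + Up * Upᴴ = 1) {τ : ℝ} {B : Matrix k k 𝕜}
    (hB : B = (diagonal (fun j => (lam (e j) : 𝕜)) - (τ : 𝕜) • 1) -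
      (Vᴴ * U * Uᴴ * V) * (diagonal (fun j => (lam (e j) : 𝕜)) - (σ : 𝕜) • 1))
    {β : ℝ} (hβ : IsLeast {x : ℝ | Module.End.HasEigenvalue B.mulVecLin (x : 𝕜)} β) :
    τ + β ≤ lamMin (Upᴴ * A * Up) := by
  set G : Matrix k (Fin q) 𝕜 := Vᴴ * Up with hG
  set D : Matrix k k 𝕜 := σ • 1 - diagonal (fun j => (lam (e j) : 𝕜))
  have hVV : Vᴴ * V = 1 := hV ▸ conjTranspose_submatrix_mul_submatrix hW he
  have hBG : B = (σ - τ) • 1 - G * Gᴴ * D := by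
    rw [hB, ← RCLike.real_smul_eq_coe_smul, ← RCLike.real_smul_eq_coe_smul]
    exact sub_compression_mul_eq_smul_one_sub hVV hcomplete _ τ σ
  have hA : σ • 1 - V * D * Vᴴ ≤ A := by
    rw [hV, hdecomp]
    exact smul_one_sub_submatrix_mul_le_mul_diagonal_mul hW lam he hge
  have hβG : β • 1 ≤ (σ - τ) • 1 - Gᴴ * D * G := by
    simp only [hasEigenvalue_mulVecLin_iff_mem_spectrum, Set.ofPred_mem_eq, hBG] at hβ
    exact smul_one_le_smul_one_sub_of_isLeast_spectrum
      (posSemidef_smul_one_sub_diagonal_ofReal hle) G hβ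
  have hHermitian : (Upᴴ * A * Up).IsHermitian := by
    rw [hdecomp]
    exact isHermitian_conjTranspose_mul_mul _ <| isHermitian_mul_mul_conjTranspose _ <|
      isHermitian_diagonal_of_self_adjoint _ <| by ext; simp
  refine le_lamMin_of_smul_one_le hHermitian ?_
  calc (τ + β) • 1 = τ • 1 + β • 1 := add_smul ..
    _ ≤ τ • 1 + ((σ - τ) • 1 - Gᴴ * D * G) := by gcongr
    _ = σ • 1 - Gᴴ * D * G := by module
    _ = Upᴴ * (σ • 1 - V * D * Vᴴ) * Up := by
      simp only [hG, Matrix.mul_sub, Matrix.sub_mul, Matrix.mul_smul, Matrix.smul_mul,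
        Matrix.mul_one, hUp, conjTranspose_mul, conjTranspose_conjTranspose, Matrix.mul_assoc]
    _ ≤ Upᴴ * A * Up := conjTranspose_mul_mul_mono hA Up

end RCLike

/-- Lemma 3.2: let `A = W diag(lam) W*` be Hermitian with unitary `W` and
sorted eigenvalues `lam`, let `V` consist of the first `ℓ` columns of `W` (eigenvectors of
the `ℓ` smallest eigenvalues), and let `U⊥` span the orthogonal complement of the
range of an orthonormal `U` with `N − r ≥ r`. Then
`λ_min(U⊥* A U⊥) ≥ λ^(1) + β`, where `β` is the smallest eigenvalue of the `ℓ×ℓ` matrix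
`(Λ − λ^(1) I) − V*UU*V (Λ − λ^(ℓ+1) I)`. -/
theorem eigenvalue_lower_bound_on_complement_of_ritz_space
    {N r ℓ : ℕ} (hℓN : ℓ < N) (hrr : r ≤ N - r)
    (A : Matrix (Fin N) (Fin N) ℂ) (hA : A.IsHermitian)
    (lam : Fin N → ℝ) (hmono : Monotone lam)
    (W : Matrix (Fin N) (Fin N) ℂ) (hW : Wᴴ * W = 1)
    (hdecomp : A = W * Matrix.diagonal (fun i => (lam i : ℂ)) * Wᴴ)
    (V : Matrix (Fin N) (Fin ℓ) ℂ)
    (hV : V = W.submatrix id (fun j : Fin ℓ => Fin.castLE hℓN.le j))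
    (U : Matrix (Fin N) (Fin r) ℂ) (Up : Matrix (Fin N) (Fin (N - r)) ℂ)
    (hU : Uᴴ * U = 1) (hUp : Upᴴ * Up = 1) (horth : Uᴴ * Up = 0)
    (hcomplete : U * Uᴴ + Up * Upᴴ = 1)
    (B : Matrix (Fin ℓ) (Fin ℓ) ℂ)
    (hB : B = (Matrix.diagonal (fun j : Fin ℓ => (lam (Fin.castLE hℓN.le j) : ℂ))
          - (lam ⟨0, by omega⟩ : ℂ) • 1)
        - (Vᴴ * U * Uᴴ * V) *
          (Matrix.diagonal (fun j : Fin ℓ => (lam (Fin.castLE hℓN.le j) : ℂ))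
            - (lam ⟨ℓ, hℓN⟩ : ℂ) • 1))
    (β : ℝ)
    (hβ : IsLeast {x : ℝ | Module.End.HasEigenvalue B.mulVecLin (x : ℂ)} β) :
    lamMin (Upᴴ * A * Up) ≥ lam ⟨0, by omega⟩ + β := by
  have : NeZero (N - r) := ⟨by omega⟩
  exact eigenvalue_lower_bound_on_complement_of_ritz_space_general hW hdecomp
    (Fin.castLE_injective hℓN.le) (fun j => hmono j.2.le)
    (fun i hi => hmono (by simpa [Fin.range_castLE, Fin.le_def] using hi)) hV hUp hcomplete hB hβ
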